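/- Let p > 1 and a, b, L > 0. Then Σ^{a,b}_p(0,L) = ((a+b)/2)^p · Σ_p(0,L), where Σ_p(0,L) := Σ^{1,1}_p(0,L) is the Fučík spectrum of the classical one-dimensional p-Laplacian: that is, (μ, ν) ∈ Σ^{a,b}_p(0,L) if and only if ( (2/(a+b))^p μ, (2/(a+b))^p ν ) ∈ Σ^{1,1}_p(0,L). -/

import Mathlib

open Set

/-- `u` is C¹ on `[α, γ]` with derivative `u'` there. -/
def C1On (α γ : ℝ) (u u' : ℝ → ℝ) : Prop :=
  (∀ t ∈ Set.Icc α γ, HasDerivWithinAt u (u' t) (Set.Icc α γ) t) ∧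
  ContinuousOn u' (Set.Icc α γ)

/-- Admissible functions on `[0, L]`: C¹ with zero boundary values. -/
def Adm (L : ℝ) (u u' : ℝ → ℝ) : Prop :=
  C1On 0 L u u' ∧ u 0 = 0 ∧ u L = 0

/-- The asymmetric energy integrand `a^p (s⁺)^p + b^p (s⁻)^p`. -/
noncomputable def asymE (p a b s : ℝ) : ℝ :=
  a ^ p * (max s 0) ^ p + b ^ p * (max (-s) 0) ^ p

/-- The asymmetric flux `a^p (s⁺)^(p-1) - b^p (s⁻)^(p-1)`. -/
noncomputable def asymFlux (p a b s : ℝ) : ℝ :=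
  a ^ p * (max s 0) ^ (p - 1) - b ^ p * (max (-s) 0) ^ (p - 1)

/-- The first Dirichlet eigenvalue `λ^{a,b}_{1,p}(0,L)`, as the infimum of the
asymmetric energy over normalized admissible functions. -/
noncomputable def lam1 (p a b L : ℝ) : ℝ :=
  sInf { E : ℝ | ∃ u u' : ℝ → ℝ, Adm L u u' ∧
    (∫ t in (0:ℝ)..L, |u t| ^ p) = 1 ∧
    E = ∫ t in (0:ℝ)..L, asymE p a b (u' t) }

/-- `u` (a C¹ function on `[0,L]` with derivative `u'` and zero boundary values)
is a weak solution of `-Δ^{a,b}_p u = g` on `(0,L)`. -/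
def IsWeakSol (p a b L : ℝ) (u u' g : ℝ → ℝ) : Prop :=
  Adm L u u' ∧
  ∀ φ φ' : ℝ → ℝ, Adm L φ φ' →
    (∫ t in (0:ℝ)..L, asymFlux p a b (u' t) * φ' t) =
      ∫ t in (0:ℝ)..L, g t * φ t

/-- `(μ, ν)` belongs to the Fučík spectrum `Σ^{a,b}_p(0,L)`. -/
def FucikMem (p a b L μ ν : ℝ) : Prop :=
  ∃ u u' : ℝ → ℝ, IsWeakSol p a b L u u'
      (fun t => μ * (max (u t) 0) ^ (p - 1) - ν * (max (-u t) 0) ^ (p - 1)) ∧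
    ∃ t ∈ Set.Icc (0:ℝ) L, u t ≠ 0

/-!
Scaling `(a, b)` by `c` multiplies the flux by `c ^ p`, so it is enough to show that the spectrum
depends on `a + b` only. Let `a + b = a' + b'` and let `u` solve the equation with weights `(a, b)`.
Run a new clock with rate `ρ = a' / a` where `u' > 0` and `ρ = b' / b` where `u' < 0`. In the new
time the flux of the reparametrised function for the weights `(a', b')` is `ρ` times the old flux,
and since `ρ` is locally constant away from the critical points of `u`, the factors `ρ` cancel and
the equation with the same `(μ, ν)` results. By conservation of energy the critical points are
countable, and the asymmetric speed `a u'⁺ + b u'⁻` equals `F (u)` for a continuous `F`. As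
`u 0 = u L`, the integral of `u' / F (u)` vanishes, and since `ρ - 1` is a multiple of this
integrand, the new clock still shows `L` at time `L`.
-/

open Filter Topology MeasureTheory

section C1On

variable {α γ : ℝ} {f f' g g' : ℝ → ℝ}

lemma C1On.continuousOn (h : C1On α γ f f') : ContinuousOn f (Icc α γ) :=
  fun t ht => (h.1 t ht).continuousWithinAt

lemma C1On.hasDerivAt (h : C1On α γ f f') {t : ℝ} (ht : t ∈ Ioo α γ) : HasDerivAt f (f' t) t :=
  (h.1 t (Ioo_subset_Icc_self ht)).hasDerivAt (Icc_mem_nhds ht.1 ht.2)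

lemma C1On.hasDerivWithinAt_Ici (h : C1On α γ f f') {t : ℝ} (ht : t ∈ Ico α γ) :
    HasDerivWithinAt f (f' t) (Ici t) t :=
  (h.1 t (Ico_subset_Icc_self ht)).mono_of_mem_nhdsWithin (Icc_mem_nhdsGE_of_mem ht)

lemma C1On.congr (h : C1On α γ f f') (hf : EqOn g f (Icc α γ)) (hf' : EqOn g' f' (Icc α γ)) :
    C1On α γ g g' := by
  refine ⟨fun t ht => ?_, h.2.congr hf'⟩
  rw [hf' ht]
  exact (h.1 t ht).congr hf (hf ht)

lemma C1On.const_add (h : C1On α γ f f') (c : ℝ) : C1On α γ (fun t => c + f t) f' :=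
  ⟨fun t ht => (h.1 t ht).const_add c, h.2⟩

lemma C1On.integral_mul_deriv (hαγ : α ≤ γ) (hf : C1On α γ f f') (hg : C1On α γ g g') :
    ∫ t in α..γ, f t * g' t = f γ * g γ - f α * g α - ∫ t in α..γ, f' t * g t := by
  refine intervalIntegral.integral_mul_deriv_eq_deriv_mul_of_hasDerivWithinAt ?_ ?_
    (hf.2.intervalIntegrable_of_Icc hαγ) (hg.2.intervalIntegrable_of_Icc hαγ) <;>
  rw [uIcc_of_le hαγ]
  exacts [hf.1, hg.1]

lemma c1On_integral (hf : ContinuousOn f (Icc α γ)) : C1On α γ (fun t => ∫ x in α..t, f x) f := by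
  refine ⟨fun t ht => ?_, hf⟩
  have : Fact (t ∈ Icc α γ) := ⟨ht⟩
  exact intervalIntegral.integral_hasDerivWithinAt_right
    ((hf.mono (Icc_subset_Icc_right ht.2)).intervalIntegrable_of_Icc ht.1)
    (hf.stronglyMeasurableAtFilter_nhdsWithin measurableSet_Icc t) (hf t ht)

lemma c1On_of_hasDerivAt_off_countable {Z : Set ℝ} (hZ : Z.Countable)
    (hf : ContinuousOn f (Icc α γ)) (hf' : ContinuousOn f' (Icc α γ))
    (hd : ∀ t ∈ Ioo α γ \ Z, HasDerivAt f (f' t) t) : C1On α γ f f' := by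
  refine ((c1On_integral hf').const_add (f α)).congr (fun t ht => ?_) fun _ _ => rfl
  have hsub : Icc α t ⊆ Icc α γ := Icc_subset_Icc_right ht.2
  beta_reduce
  rw [integral_eq_of_hasDerivAt_off_countable_of_le f f' ht.1 hZ (hf.mono hsub)
    (fun x hx => hd x ⟨⟨hx.1.1, hx.1.2.trans_le ht.2⟩, hx.2⟩)
    ((hf'.mono hsub).intervalIntegrable_of_Icc ht.1), add_sub_cancel]

lemma c1On_comp_orderIso_symm {s : ℝ ≃o ℝ} {ρ : ℝ → ℝ} {Z : Set ℝ} (hZ : Z.Countable)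
    (hs : ∀ t ∈ Ioo α γ \ Z, HasDerivAt s (ρ t) t) (hρ : ∀ t ∈ Ioo α γ \ Z, ρ t ≠ 0)
    (hf : ContinuousOn f (Icc α γ)) (hf' : ContinuousOn f' (Icc α γ))
    (hd : ∀ t ∈ Ioo α γ \ Z, HasDerivAt f (ρ t * f' t) t) :
    C1On (s α) (s γ) (fun x => f (s.symm x)) (fun x => f' (s.symm x)) := by
  have hmaps : MapsTo s.symm (Icc (s α) (s γ)) (Icc α γ) := fun x hx =>
    ⟨s.le_symm_apply.2 hx.1, s.symm_apply_le.2 hx.2⟩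
  have hcont : Continuous s.symm := s.symm.continuous
  refine c1On_of_hasDerivAt_off_countable (hZ.image s) (hf.comp hcont.continuousOn hmaps)
    (hf'.comp hcont.continuousOn hmaps) fun x hx => ?_
  have ht : s.symm x ∈ Ioo α γ \ Z :=
    ⟨⟨s.lt_symm_apply.2 hx.1.1, s.symm_apply_lt.2 hx.1.2⟩, fun hmem =>
      hx.2 ⟨_, hmem, s.apply_symm_apply x⟩⟩
  have hsymm : HasDerivAt s.symm (ρ (s.symm x))⁻¹ x :=
    (hs _ ht).of_local_left_inverse hcont.continuousAt (hρ _ ht) (.of_forall s.apply_symm_apply)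
  refine ((hd _ ht).comp x hsymm).congr_deriv ?_
  rw [mul_right_comm, mul_inv_cancel₀ (hρ _ ht), one_mul]

end C1On

lemma countable_setOf_eq_zero_of_hasDerivAt_ne_zero {f f' : ℝ → ℝ} {S : Set ℝ}
    (hf : ∀ t ∈ S, f t = 0 → HasDerivAt f (f' t) t ∧ f' t ≠ 0) :
    {t ∈ S | f t = 0}.Countable := by
  refine (countable_setOfPred_isolated_right_within (s := {t ∈ S | f t = 0})).mono ?_
  refine fun t ht => ⟨ht, ?_⟩
  obtain ⟨hd, hne⟩ := hf t ht.1 ht.2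
  have hev : ∀ᶠ x in 𝓝[{t ∈ S | f t = 0} ∩ Ioi t] t, f x ≠ 0 :=
    (hd.eventually_ne hne).filter_mono (nhdsWithin_mono t fun x hx => hx.2.ne')
  rw [← eventually_false_iff_eq_bot]
  filter_upwards [hev, self_mem_nhdsWithin] with x hx hmem using hx hmem.1.2

lemma exists_orderIso_eq_integral {ρ : ℝ → ℝ} {δ B : ℝ} (hρ : Measurable ρ) (hδ : 0 < δ)
    (hδρ : ∀ t, δ ≤ ρ t) (hρB : ∀ t, ρ t ≤ B) :
    ∃ s : ℝ ≃o ℝ, (∀ t, s t = ∫ x in (0 : ℝ)..t, ρ x) ∧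
      ∀ t, ContinuousAt ρ t → HasDerivAt s (ρ t) t := by
  have hint (x y : ℝ) : IntervalIntegrable ρ volume x y := by
    refine (intervalIntegrable_const (c := B)).mono_fun hρ.aestronglyMeasurable
      (.of_forall fun t => ?_)
    have hpos : 0 ≤ ρ t := hδ.le.trans (hδρ t)
    exact (Real.norm_of_nonneg hpos).trans_le ((hρB t).trans (le_abs_self B))
  set s : ℝ → ℝ := fun t => ∫ x in (0 : ℝ)..t, ρ x
  have hgrowth {x y : ℝ} (hxy : x ≤ y) : δ * (y - x) ≤ s y - s x := by
    have hle := intervalIntegral.integral_mono hxy intervalIntegrable_const (hint x y) hδρ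
    rw [intervalIntegral.integral_const, smul_eq_mul, mul_comm] at hle
    rwa [intervalIntegral.integral_interval_sub_left (hint 0 y) (hint 0 x)]
  have hmono : StrictMono s := fun x y hxy => by
    linarith [hgrowth hxy.le, mul_pos hδ (sub_pos.2 hxy)]
  have hs0 : s 0 = 0 := intervalIntegral.integral_same
  have hsurj : Function.Surjective s := by
    refine (intervalIntegral.continuous_primitive hint 0).surjective ?_ ?_
    · refine tendsto_atTop_mono' _ ?_ (tendsto_id.const_mul_atTop hδ)
      filter_upwards [eventually_ge_atTop 0] with t ht
      simpa [hs0] using hgrowth ht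
    · refine tendsto_atBot_mono' _ ?_ (tendsto_id.const_mul_atBot hδ)
      filter_upwards [eventually_le_atBot 0] with t ht
      simpa [hs0] using hgrowth ht
  refine ⟨hmono.orderIsoOfSurjective s hsurj, fun _ => rfl, fun t ht => ?_⟩
  exact intervalIntegral.integral_hasDerivAt_right (hint 0 t)
    hρ.stronglyMeasurable.stronglyMeasurableAtFilter ht

lemma eqOn_const_of_forall_adm_integral_mul_deriv_eq_zero {L : ℝ} (hL : 0 < L) {h : ℝ → ℝ}
    (hh : ContinuousOn h (Icc 0 L))
    (hint : ∀ φ φ' : ℝ → ℝ, Adm L φ φ' → ∫ t in (0 : ℝ)..L, h t * φ' t = 0) :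
    EqOn h (fun _ => (∫ t in (0 : ℝ)..L, h t) / L) (Icc 0 L) := by
  set m : ℝ := (∫ t in (0 : ℝ)..L, h t) / L with hm
  have hd : ContinuousOn (fun t => h t - m) (Icc 0 L) := hh.sub continuousOn_const
  have hdint := hd.intervalIntegrable_of_Icc hL.le (μ := volume)
  have hmean : ∫ t in (0 : ℝ)..L, (h t - m) = 0 := by
    rw [intervalIntegral.integral_sub (hh.intervalIntegrable_of_Icc hL.le)
      intervalIntegrable_const, intervalIntegral.integral_const, hm, sub_zero, smul_eq_mul,
      mul_div_cancel₀ _ hL.ne', sub_self]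
  have hadm : Adm L (fun t => ∫ x in (0 : ℝ)..t, (h x - m)) (fun t => h t - m) :=
    ⟨c1On_integral hd, intervalIntegral.integral_same, hmean⟩
  have hsq : ∫ t in (0 : ℝ)..L, (h t - m) * (h t - m) = 0 := by
    calc ∫ t in (0 : ℝ)..L, (h t - m) * (h t - m)
        = (∫ t in (0 : ℝ)..L, h t * (h t - m)) - ∫ t in (0 : ℝ)..L, m * (h t - m) := by
          have hhdint := (hh.mul hd).intervalIntegrable_of_Icc hL.le (μ := volume)
          exact (intervalIntegral.integral_congr fun t _ => sub_mul _ _ _).trans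
            (intervalIntegral.integral_sub hhdint (hdint.const_mul m))
      _ = 0 := by rw [hint _ _ hadm, intervalIntegral.integral_const_mul, hmean, mul_zero, sub_zero]
  intro t ht
  by_contra htm
  exact (intervalIntegral.integral_pos hL (hd.mul hd) (fun _ _ => mul_self_nonneg _)
    ⟨t, ht, mul_self_pos.2 (sub_ne_zero.2 htm)⟩).ne' hsq

lemma forall_adm_integral_mul_deriv_eq_iff {L : ℝ} (hL : 0 < L) {w g : ℝ → ℝ}
    (hw : ContinuousOn w (Icc 0 L)) (hg : ContinuousOn g (Icc 0 L)) :
    (∀ φ φ' : ℝ → ℝ, Adm L φ φ' →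
      (∫ t in (0 : ℝ)..L, w t * φ' t) = ∫ t in (0 : ℝ)..L, g t * φ t) ↔
    C1On 0 L w (fun t => -g t) := by
  constructor
  · intro h
    set G : ℝ → ℝ := fun t => ∫ x in (0 : ℝ)..t, -g x
    have hG : C1On 0 L G (fun t => -g t) := c1On_integral hg.neg
    have hconst := eqOn_const_of_forall_adm_integral_mul_deriv_eq_zero hL (hw.sub hG.continuousOn)
      fun φ φ' ⟨hφ, hφ0, hφL⟩ => by
        have hparts := hG.integral_mul_deriv hL.le hφ
        simp only [hφ0, hφL, mul_zero, sub_zero, zero_sub, neg_mul,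
          intervalIntegral.integral_neg, neg_neg] at hparts
        have hwint := (hw.mul hφ.2).intervalIntegrable_of_Icc hL.le (μ := volume)
        have hGint := (hG.continuousOn.mul hφ.2).intervalIntegrable_of_Icc hL.le (μ := volume)
        calc ∫ t in (0 : ℝ)..L, (w - G) t * φ' t
            = ∫ t in (0 : ℝ)..L, (w t * φ' t - G t * φ' t) := by simp only [Pi.sub_apply, sub_mul]
          _ = (∫ t in (0 : ℝ)..L, w t * φ' t) - ∫ t in (0 : ℝ)..L, G t * φ' t :=
            intervalIntegral.integral_sub hwint hGint
          _ = 0 := by rw [hparts, h φ φ' ⟨hφ, hφ0, hφL⟩, sub_self]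
    exact (hG.const_add _).congr (fun t ht => sub_eq_iff_eq_add.1 (hconst ht)) fun _ _ => rfl
  · rintro h φ φ' ⟨hφ, hφ0, hφL⟩
    have hparts := h.integral_mul_deriv hL.le hφ
    simpa only [hφ0, hφL, mul_zero, sub_zero, zero_sub, neg_mul,
      intervalIntegral.integral_neg, neg_neg] using hparts

/-- The asymmetric power `μ (s⁺) ^ q - ν (s⁻) ^ q`, common to both sides of the equation: the flux
`asymFlux p a b` is `asymPow (p - 1) (a ^ p) (b ^ p)` and the right-hand side of the Fučík equation
is `asymPow (p - 1) μ ν`, both definitionally. A primitive of `p * asymPow (p - 1) μ ν` is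
`asymPow p μ (-ν)`, with the sign of the second coefficient reversed. -/
noncomputable def asymPow (q μ ν s : ℝ) : ℝ :=
  μ * (max s 0) ^ q - ν * (max (-s) 0) ^ q

section asymPow

variable {p q r μ ν α β x : ℝ}

lemma asymPow_of_pos (hq : q ≠ 0) (hx : 0 < x) : asymPow q μ ν x = μ * x ^ q := by
  rw [asymPow, max_eq_left hx.le, max_eq_right (neg_nonpos.2 hx.le), Real.zero_rpow hq, mul_zero,
    sub_zero]

lemma asymPow_of_neg (hq : q ≠ 0) (hx : x < 0) : asymPow q μ ν x = -(ν * (-x) ^ q) := by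
  rw [asymPow, max_eq_right hx.le, max_eq_left (neg_nonneg.2 hx.le), Real.zero_rpow hq, mul_zero,
    zero_sub]

lemma asymPow_zero (hq : q ≠ 0) : asymPow q μ ν 0 = 0 := by
  simp [asymPow, Real.zero_rpow hq]

lemma continuous_asymPow (hq : 0 < q) (μ ν : ℝ) : Continuous (asymPow q μ ν) :=
  (((continuous_id.max continuous_const).rpow_const fun _ => Or.inr hq.le).const_mul μ).sub
    (((continuous_neg.max continuous_const).rpow_const fun _ => Or.inr hq.le).const_mul ν)

lemma hasDerivAt_asymPow_of_ne (hq : 1 < q) (hx : x ≠ 0) :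
    HasDerivAt (asymPow q μ ν) (q * asymPow (q - 1) μ (-ν) x) x := by
  have hq₀ : q ≠ 0 := by positivity
  have hq₁ : q - 1 ≠ 0 := (sub_pos.2 hq).ne'
  rcases hx.lt_or_gt with hneg | hpos
  · have hd : HasDerivAt (fun y : ℝ => -(ν * (-y) ^ q)) (q * asymPow (q - 1) μ (-ν) x) x := by
      refine (((hasDerivAt_neg x).rpow_const (Or.inr hq.le)).const_mul ν).neg.congr_deriv ?_
      rw [asymPow_of_neg hq₁ hneg]
      ring
    exact hd.congr_of_eventuallyEq <|
      (eventually_lt_nhds hneg).mono fun y hy => asymPow_of_neg hq₀ hy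
  · have hd : HasDerivAt (fun y : ℝ => μ * y ^ q) (q * asymPow (q - 1) μ (-ν) x) x := by
      refine ((Real.hasDerivAt_rpow_const (Or.inr hq.le)).const_mul μ).congr_deriv ?_
      rw [asymPow_of_pos hq₁ hpos]
      ring
    exact hd.congr_of_eventuallyEq <|
      (eventually_gt_nhds hpos).mono fun y hy => asymPow_of_pos hq₀ hy

lemma hasDerivAt_asymPow (hq : 1 < q) (μ ν x : ℝ) :
    HasDerivAt (asymPow q μ ν) (q * asymPow (q - 1) μ (-ν) x) x := by
  by_cases hx : x = 0
  · subst hx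
    exact hasDerivAt_of_hasDerivAt_of_ne (fun y hy => hasDerivAt_asymPow_of_ne hq hy)
      (continuous_asymPow (zero_lt_one.trans hq) μ ν).continuousAt
      ((continuous_asymPow (sub_pos.2 hq) μ (-ν)).const_mul q).continuousAt
  · exact hasDerivAt_asymPow_of_ne hq hx

lemma mul_asymPow_sub_one (hq : 1 < q) (μ ν x : ℝ) :
    x * asymPow (q - 1) μ ν x = asymPow q μ (-ν) x := by
  have hq₀ : q ≠ 0 := by positivity
  have hq₁ : q - 1 ≠ 0 := (sub_pos.2 hq).ne'
  have hpow {y : ℝ} (hy : 0 < y) : y * y ^ (q - 1) = y ^ q := by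
    rw [Real.rpow_sub_one hy.ne', mul_div_cancel₀ _ hy.ne']
  rcases lt_trichotomy x 0 with hneg | rfl | hpos
  · rw [asymPow_of_neg hq₁ hneg, asymPow_of_neg hq₀ hneg, ← hpow (neg_pos.2 hneg)]
    ring
  · rw [zero_mul, asymPow_zero hq₀]
  · rw [asymPow_of_pos hq₁ hpos, asymPow_of_pos hq₀ hpos, ← hpow hpos]
    ring

lemma asymPow_pos (hq : q ≠ 0) (hα : 0 < α) (hx : 0 < x) : 0 < asymPow q α β x := by
  rw [asymPow_of_pos hq hx]
  positivity

lemma asymPow_neg (hq : q ≠ 0) (hβ : 0 < β) (hx : x < 0) : asymPow q α β x < 0 := by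
  rw [asymPow_of_neg hq hx, neg_lt_zero]
  exact mul_pos hβ (Real.rpow_pos_of_pos (neg_pos.2 hx) q)

lemma asymPow_asymPow (hq : q ≠ 0) (hr : r ≠ 0) (hα : 0 < α) (hβ : 0 < β) (μ ν x : ℝ) :
    asymPow q μ ν (asymPow r α β x) = asymPow (r * q) (α ^ q * μ) (β ^ q * ν) x := by
  have hrq : r * q ≠ 0 := mul_ne_zero hr hq
  rcases lt_trichotomy x 0 with hneg | rfl | hpos
  · have hx : 0 < -x := neg_pos.2 hneg
    rw [asymPow_of_neg hq (asymPow_neg hr hβ hneg), asymPow_of_neg hr hneg, neg_neg,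
      asymPow_of_neg hrq hneg, Real.mul_rpow hβ.le (Real.rpow_nonneg hx.le _),
      ← Real.rpow_mul hx.le]
    ring
  · rw [asymPow_zero hr, asymPow_zero hq, asymPow_zero hrq]
  · rw [asymPow_of_pos hq (asymPow_pos hr hα hpos), asymPow_of_pos hr hpos,
      asymPow_of_pos hrq hpos, Real.mul_rpow hα.le (Real.rpow_nonneg hpos.le _),
      ← Real.rpow_mul hpos.le]
    ring

lemma abs_asymPow_le (hq : q ≠ 0) (μ ν x : ℝ) :
    |asymPow q μ ν x| ≤ max |μ| |ν| * |x| ^ q := by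
  rcases lt_trichotomy x 0 with hneg | rfl | hpos
  · rw [asymPow_of_neg hq hneg, abs_neg, abs_mul, ← abs_of_neg hneg,
      abs_of_nonneg (Real.rpow_nonneg (abs_nonneg x) q)]
    gcongr
    exact le_max_right _ _
  · simp [asymPow_zero hq, Real.zero_rpow hq]
  · rw [asymPow_of_pos hq hpos, abs_mul, ← abs_of_pos hpos,
      abs_of_nonneg (Real.rpow_nonneg (abs_nonneg _) q), abs_abs]
    gcongr
    exact le_max_left _ _

end asymPow

/-- The asymmetric norm `a s⁺ + b s⁻` on the line, whose `p`-th power is `asymE p a b s`. -/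
noncomputable def asymNorm (a b s : ℝ) : ℝ :=
  a * max s 0 + b * max (-s) 0

section asymNorm

variable {p a b y : ℝ}

lemma asymNorm_of_nonneg (a b : ℝ) (hy : 0 ≤ y) : asymNorm a b y = a * y := by
  rw [asymNorm, max_eq_left hy, max_eq_right (neg_nonpos.2 hy), mul_zero, add_zero]

lemma asymNorm_of_nonpos (a b : ℝ) (hy : y ≤ 0) : asymNorm a b y = b * -y := by
  rw [asymNorm, max_eq_right hy, max_eq_left (neg_nonneg.2 hy), mul_zero, zero_add]

lemma continuous_asymNorm (a b : ℝ) : Continuous (asymNorm a b) :=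
  ((continuous_id.max continuous_const).const_mul a).add
    ((continuous_neg.max continuous_const).const_mul b)

lemma min_mul_abs_le_asymNorm (a b y : ℝ) : min a b * |y| ≤ asymNorm a b y := by
  rcases le_total 0 y with hy | hy
  · rw [asymNorm_of_nonneg a b hy, abs_of_nonneg hy]
    exact mul_le_mul_of_nonneg_right (min_le_left a b) hy
  · rw [asymNorm_of_nonpos a b hy, abs_of_nonpos hy]
    exact mul_le_mul_of_nonneg_right (min_le_right a b) (neg_nonneg.2 hy)

lemma asymNorm_nonneg (ha : 0 < a) (hb : 0 < b) (y : ℝ) : 0 ≤ asymNorm a b y :=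
  (mul_nonneg (lt_min ha hb).le (abs_nonneg y)).trans (min_mul_abs_le_asymNorm a b y)

lemma abs_div_asymNorm_le (ha : 0 < a) (hb : 0 < b) (y : ℝ) :
    |y / asymNorm a b y| ≤ (min a b)⁻¹ := by
  have hm : 0 < min a b := lt_min ha hb
  rw [abs_div, abs_of_nonneg (asymNorm_nonneg ha hb y)]
  refine div_le_of_le_mul₀ (asymNorm_nonneg ha hb y) (inv_nonneg.2 hm.le) ?_
  rw [← div_eq_inv_mul, le_div_iff₀' hm]
  exact min_mul_abs_le_asymNorm a b y

lemma asymNorm_rpow (hp : 0 < p) (ha : 0 < a) (hb : 0 < b) (y : ℝ) :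
    asymNorm a b y ^ p = asymPow p (a ^ p) (-(b ^ p)) y := by
  rcases lt_trichotomy y 0 with hneg | rfl | hpos
  · rw [asymNorm_of_nonpos a b hneg.le, asymPow_of_neg hp.ne' hneg,
      Real.mul_rpow hb.le (neg_pos.2 hneg).le, neg_mul, neg_neg]
  · rw [asymNorm_of_nonneg a b le_rfl, mul_zero, asymPow_zero hp.ne', Real.zero_rpow hp.ne']
  · rw [asymNorm_of_nonneg a b hpos.le, asymPow_of_pos hp.ne' hpos, Real.mul_rpow ha.le hpos.le]

end asymNorm

section Flux

variable {p a b : ℝ}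

lemma continuous_asymFlux (hp : 1 < p) (a b : ℝ) : Continuous (asymFlux p a b) :=
  continuous_asymPow (sub_pos.2 hp) _ _

lemma asymFlux_eq_zero_iff (hp : 1 < p) (ha : 0 < a) (hb : 0 < b) {y : ℝ} :
    asymFlux p a b y = 0 ↔ y = 0 := by
  have hp₁ : p - 1 ≠ 0 := (sub_pos.2 hp).ne'
  refine ⟨fun h => ?_, fun h => h ▸ asymPow_zero hp₁⟩
  rcases lt_trichotomy y 0 with hneg | rfl | hpos
  · exact absurd h (asymPow_neg hp₁ (Real.rpow_pos_of_pos hb p) hneg).ne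
  · rfl
  · exact absurd h (asymPow_pos hp₁ (Real.rpow_pos_of_pos ha p) hpos).ne'

-- With `q = p / (p - 1)`, `Ψ / q` is the Legendre transform of `asymNorm a b ^ p / p`, the
-- primitive of the flux.
lemma exists_legendre_dual_asymFlux (hp : 1 < p) (ha : 0 < a) (hb : 0 < b) :
    ∃ Ψ : ℝ → ℝ, ∀ y, Ψ (asymFlux p a b y) = asymNorm a b y ^ p ∧
      HasDerivAt Ψ (p / (p - 1) * y) (asymFlux p a b y) := by
  have hp₁ : 0 < p - 1 := sub_pos.2 hp
  have hp₀ : 0 < p := zero_lt_one.trans hp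
  set q : ℝ := p / (p - 1)
  have hq₁ : 1 < q := (one_lt_div hp₁).2 (sub_one_lt p)
  have hpq : (p - 1) * q = p := mul_div_cancel₀ p hp₁.ne'
  have hpq' : (p - 1) * (q - 1) = 1 := by rw [mul_sub_one, hpq, sub_sub_cancel]
  have hA : 0 < a ^ p := Real.rpow_pos_of_pos ha p
  have hB : 0 < b ^ p := Real.rpow_pos_of_pos hb p
  have hcancel {c : ℝ} (hc : 0 < c) : c ^ (q - 1) * c ^ (1 - q) = 1 := by
    rw [← Real.rpow_add hc, sub_add_sub_cancel, sub_self, Real.rpow_zero]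
  have hsplit {c : ℝ} (hc : 0 < c) : c ^ q * c ^ (1 - q) = c := by
    rw [← Real.rpow_add hc, add_sub_cancel, Real.rpow_one]
  refine ⟨asymPow q ((a ^ p) ^ (1 - q)) (-(b ^ p) ^ (1 - q)), fun y => ⟨?_, ?_⟩⟩
  · rw [asymNorm_rpow hp₀ ha hb]
    refine (asymPow_asymPow (by positivity) hp₁.ne' hA hB _ _ y).trans ?_
    rw [hpq, mul_neg, hsplit hA, hsplit hB]
  · refine (hasDerivAt_asymPow hq₁ _ _ _).congr_deriv (congrArg (q * ·) ?_)
    refine (asymPow_asymPow (sub_pos.2 hq₁).ne' hp₁.ne' hA hB _ _ y).trans ?_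
    rw [hpq', neg_neg, hcancel hA, hcancel hB]
    simp [asymPow, max_zero_sub_max_neg_zero_eq_self]

end Flux

/-- A nontrivial Dirichlet solution of the Fučík equation in divergence form: the flux of `u'` is
`C¹` with derivative minus the right-hand side. Only the values on `[0, L]` matter; the extension
of `u'` to a continuous function on `ℝ` is a normalisation. -/
structure IsFucikSol (p a b L μ ν : ℝ) (u u' : ℝ → ℝ) : Prop where
  adm : Adm L u u'
  continuous_deriv : Continuous u'
  flux : C1On 0 L (fun t => asymFlux p a b (u' t)) (fun t => -asymPow (p - 1) μ ν (u t))
  nontrivial : ∃ t ∈ Icc 0 L, u t ≠ 0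

section Solutions

variable {p a b L μ ν : ℝ} {u u' : ℝ → ℝ}

lemma isWeakSol_iff_flux (hp : 1 < p) (hL : 0 < L) {g : ℝ → ℝ} (hg : ContinuousOn g (Icc 0 L)) :
    IsWeakSol p a b L u u' g ↔
      Adm L u u' ∧ C1On 0 L (fun t => asymFlux p a b (u' t)) (fun t => -g t) :=
  and_congr_right fun h => forall_adm_integral_mul_deriv_eq_iff hL
    ((continuous_asymFlux hp a b).comp_continuousOn h.1.2) hg

lemma Adm.continuousOn_asymPow (h : Adm L u u') (hp : 1 < p) (μ ν : ℝ) :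
    ContinuousOn (fun t => asymPow (p - 1) μ ν (u t)) (Icc 0 L) :=
  (continuous_asymPow (sub_pos.2 hp) μ ν).comp_continuousOn h.1.continuousOn

lemma fucikMem_iff_exists_isFucikSol (hp : 1 < p) (hL : 0 < L) :
    FucikMem p a b L μ ν ↔ ∃ u u' : ℝ → ℝ, IsFucikSol p a b L μ ν u u' := by
  constructor
  · rintro ⟨u, u', hweak, hne⟩
    obtain ⟨hu, hflux⟩ := (isWeakSol_iff_flux hp hL (hweak.1.continuousOn_asymPow hp μ ν)).1 hweak
    have hext : EqOn (IccExtend hL.le ((Icc 0 L).domRestrict u')) u' (Icc 0 L) := fun t ht =>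
      IccExtend_of_mem hL.le _ ht
    exact ⟨u, IccExtend hL.le ((Icc 0 L).domRestrict u'), ⟨hu.1.congr (eqOn_refl u _) hext, hu.2⟩,
      hu.1.2.domRestrict.Icc_extend',
      hflux.congr (fun t ht => congrArg _ (hext ht)) (eqOn_refl _ _), hne⟩
  · rintro ⟨u, u', h⟩
    exact ⟨u, u', (isWeakSol_iff_flux hp hL (h.adm.continuousOn_asymPow hp μ ν)).2 ⟨h.adm, h.flux⟩,
      h.nontrivial⟩

namespace IsFucikSol

lemma exists_energy (h : IsFucikSol p a b L μ ν u u') (hp : 1 < p) (ha : 0 < a) (hb : 0 < b) :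
    ∃ E, ∀ t ∈ Icc 0 L, (p - 1) * asymNorm a b (u' t) ^ p + asymPow p μ (-ν) (u t) = E := by
  obtain ⟨Ψ, hΨ⟩ := exists_legendre_dual_asymFlux hp ha hb
  have hderiv (t : ℝ) (s : Set ℝ) (hu : HasDerivWithinAt u (u' t) s t)
      (hw : HasDerivWithinAt (fun t => asymFlux p a b (u' t)) (-asymPow (p - 1) μ ν (u t)) s t) :
      HasDerivWithinAt
        (fun t => (p - 1) * Ψ (asymFlux p a b (u' t)) + asymPow p μ (-ν) (u t)) 0 s t := by
    refine ((((hΨ (u' t)).2.comp_hasDerivWithinAt t hw).const_mul (p - 1)).add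
      ((hasDerivAt_asymPow hp μ (-ν) (u t)).comp_hasDerivWithinAt t hu)).congr_deriv ?_
    have : p - 1 ≠ 0 := (sub_pos.2 hp).ne'
    rw [neg_neg]
    field_simp
    ring
  have hconst := constant_of_has_deriv_right_zero
    (fun t ht => (hderiv t _ (h.adm.1.1 t ht) (h.flux.1 t ht)).continuousWithinAt)
    (fun t ht => hderiv t _ (h.adm.1.hasDerivWithinAt_Ici ht) (h.flux.hasDerivWithinAt_Ici ht))
  simp only [(hΨ _).1] at hconst
  exact ⟨_, hconst⟩

lemma energy_ne_zero (h : IsFucikSol p a b L μ ν u u') (hp : 1 < p) (ha : 0 < a) (hb : 0 < b)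
    {E : ℝ}
    (hE : ∀ t ∈ Icc 0 L, (p - 1) * asymNorm a b (u' t) ^ p + asymPow p μ (-ν) (u t) = E) :
    E ≠ 0 := by
  rintro rfl
  have hp₁ : 0 < p - 1 := sub_pos.2 hp
  have hp₀ : 0 < p := zero_lt_one.trans hp
  have hm : 0 < min a b := lt_min ha hb
  set c : ℝ := max |μ| |-ν| / (p - 1)
  have hc : 0 ≤ c := by positivity
  have hnorm {t : ℝ} (ht : t ∈ Icc 0 L) : asymNorm a b (u' t) ≤ c ^ p⁻¹ * |u t| := by
    rw [← Real.rpow_le_rpow_iff (asymNorm_nonneg ha hb _) (by positivity) hp₀,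
      Real.mul_rpow (by positivity) (abs_nonneg _), Real.rpow_inv_rpow hc hp₀.ne',
      div_mul_eq_mul_div, le_div_iff₀' hp₁, eq_neg_of_add_eq_zero_left (hE t ht)]
    exact (neg_le_abs _).trans (abs_asymPow_le hp₀.ne' _ _ _)
  obtain ⟨t, ht, hne⟩ := h.nontrivial
  refine hne (eq_zero_of_abs_deriv_le_mul_abs_self_of_eq_zero_right
    (K := c ^ p⁻¹ / min a b) h.adm.1.continuousOn
    (fun t ht => h.adm.1.hasDerivWithinAt_Ici ht) h.adm.2.1 (fun t ht => ?_) t ht)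
  rw [div_mul_eq_mul_div, Real.norm_eq_abs, Real.norm_eq_abs, le_div_iff₀' hm]
  exact (min_mul_abs_le_asymNorm a b _).trans (hnorm (Ico_subset_Icc_self ht))

lemma countable_setOf_deriv_eq_zero (h : IsFucikSol p a b L μ ν u u') (hp : 1 < p) (ha : 0 < a)
    (hb : 0 < b) : {t ∈ Ioo 0 L | u' t = 0}.Countable := by
  obtain ⟨E, hE⟩ := h.exists_energy hp ha hb
  have hsource {t : ℝ} (ht : t ∈ Ioo 0 L) (hcrit : u' t = 0) : asymPow (p - 1) μ ν (u t) ≠ 0 := by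
    have hp₀ : p ≠ 0 := (zero_lt_one.trans hp).ne'
    refine fun hzero => h.energy_ne_zero hp ha hb hE ?_
    rw [← hE t (Ioo_subset_Icc_self ht), hcrit, asymNorm_of_nonneg a b le_rfl, mul_zero,
      Real.zero_rpow hp₀, mul_zero, zero_add, ← mul_asymPow_sub_one hp, hzero, mul_zero]
  have hflux : {t ∈ Ioo 0 L | asymFlux p a b (u' t) = 0}.Countable :=
    countable_setOf_eq_zero_of_hasDerivAt_ne_zero fun t ht hzero =>
      ⟨h.flux.hasDerivAt ht, neg_ne_zero.2 (hsource ht ((asymFlux_eq_zero_iff hp ha hb).1 hzero))⟩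
  simpa only [asymFlux_eq_zero_iff hp ha hb] using hflux

end IsFucikSol

end Solutions

lemma tendsto_integral_div_add {α γ κ : ℝ} {v g : ℝ → ℝ} (hαγ : α ≤ γ)
    (hv : ContinuousOn v (Icc α γ)) (hg : ContinuousOn g (Icc α γ)) (hκ : 0 < κ)
    (hle : ∀ t ∈ Icc α γ, κ * |v t| ≤ g t) :
    Tendsto (fun ε => ∫ t in α..γ, v t / (g t + ε)) (𝓝[>] 0) (𝓝 (∫ t in α..γ, v t / g t)) := by
  have hmem {t : ℝ} (ht : t ∈ uIoc α γ) : t ∈ Icc α γ :=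
    Ioc_subset_Icc_self (uIoc_of_le hαγ ▸ ht)
  have hg₀ {t : ℝ} (ht : t ∈ Icc α γ) : 0 ≤ g t :=
    (mul_nonneg hκ.le (abs_nonneg _)).trans (hle t ht)
  have hden {t ε : ℝ} (ht : t ∈ Icc α γ) (hε : 0 < ε) : 0 < g t + ε :=
    add_pos_of_nonneg_of_pos (hg₀ ht) hε
  refine intervalIntegral.tendsto_integral_filter_of_dominated_convergence (fun _ => κ⁻¹)
    ?_ ?_ intervalIntegrable_const (.of_forall fun t ht => ?_)
  · filter_upwards [self_mem_nhdsWithin] with ε hε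
    exact ((hv.div (hg.add continuousOn_const) fun t ht => (hden ht hε).ne').mono
      fun t => hmem).aestronglyMeasurable measurableSet_uIoc
  · filter_upwards [self_mem_nhdsWithin] with ε hε
    refine .of_forall fun t ht => ?_
    rw [Real.norm_eq_abs, abs_div, abs_of_pos (hden (hmem ht) hε), div_le_iff₀ (hden (hmem ht) hε),
      ← div_eq_inv_mul, le_div_iff₀' hκ]
    exact (hle t (hmem ht)).trans (le_add_of_nonneg_right hε.le)
  · rcases (hg₀ (hmem ht)).eq_or_lt with hzero | hpos
    · have hv₀ : |v t| ≤ 0 := nonpos_of_mul_nonpos_right ((hle t (hmem ht)).trans_eq hzero.symm) hκ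
      simp only [abs_nonpos_iff.1 hv₀, zero_div, tendsto_const_nhds]
    · have hlim : Tendsto (fun ε => g t + ε) (𝓝[>] 0) (𝓝 (g t)) := by
        simpa using ((continuous_const_add (g t)).tendsto 0).mono_left nhdsWithin_le_nhds
      exact tendsto_const_nhds.div hlim hpos.ne'

lemma C1On.integral_deriv_div_comp_eq_zero {α γ κ : ℝ} {u u' F : ℝ → ℝ} (hαγ : α ≤ γ)
    (hu : C1On α γ u u') (hends : u α = u γ) (hF : Continuous F) (hκ : 0 < κ)
    (hle : ∀ t ∈ Icc α γ, κ * |u' t| ≤ F (u t)) : ∫ t in α..γ, u' t / F (u t) = 0 := by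
  have hsubst {ε : ℝ} (hε : 0 < ε) : ∫ t in α..γ, u' t / (F (u t) + ε) = 0 := by
    have hden {t : ℝ} (ht : t ∈ uIcc α γ) : F (u t) + ε ≠ 0 := by
      have hFu := hle t (uIcc_of_le hαγ ▸ ht)
      exact (add_pos_of_nonneg_of_pos ((mul_nonneg hκ.le (abs_nonneg _)).trans hFu) hε).ne'
    have hH : ContinuousOn (fun x => (F x + ε)⁻¹) (u '' uIcc α γ) :=
      (hF.add continuous_const).continuousOn.inv₀ (forall_mem_image.2 fun t => hden)
    have hcomp := intervalIntegral.integral_comp_mul_deriv'' (uIcc_of_le hαγ ▸ hu.continuousOn)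
      (fun t ht => (hu.hasDerivAt (by simpa [hαγ] using ht)).hasDerivWithinAt)
      (uIcc_of_le hαγ ▸ hu.2) hH
    rw [hends, intervalIntegral.integral_same] at hcomp
    simpa only [Function.comp_apply, div_eq_inv_mul] using hcomp
  refine tendsto_nhds_unique
    (tendsto_integral_div_add hαγ hu.2 (hF.comp_continuousOn hu.continuousOn) hκ hle)
    (tendsto_const_nhds.congr' ?_)
  filter_upwards [self_mem_nhdsWithin] with ε hε using (hsubst hε).symm

namespace IsFucikSol

variable {p a b L μ ν : ℝ} {u u' : ℝ → ℝ}

lemma integral_deriv_div_asymNorm (h : IsFucikSol p a b L μ ν u u') (hp : 1 < p) (ha : 0 < a)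
    (hb : 0 < b) (hL : 0 ≤ L) : ∫ t in (0 : ℝ)..L, u' t / asymNorm a b (u' t) = 0 := by
  obtain ⟨E, hE⟩ := h.exists_energy hp ha hb
  have hp₀ : 0 < p := zero_lt_one.trans hp
  set F : ℝ → ℝ := fun x => ((E - asymPow p μ (-ν) x) / (p - 1)) ^ p⁻¹
  have hF : Continuous F :=
    ((continuous_const.sub (continuous_asymPow hp₀ μ (-ν))).div_const (p - 1)).rpow_const
      fun _ => Or.inr (inv_nonneg.2 hp₀.le)
  have hFu {t : ℝ} (ht : t ∈ Icc 0 L) : F (u t) = asymNorm a b (u' t) := by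
    have hbase : (E - asymPow p μ (-ν) (u t)) / (p - 1) = asymNorm a b (u' t) ^ p := by
      rw [← hE t ht, add_sub_cancel_right, mul_div_cancel_left₀ _ (sub_pos.2 hp).ne']
    simp only [F, hbase, Real.rpow_rpow_inv (asymNorm_nonneg ha hb _) hp₀.ne']
  calc ∫ t in (0 : ℝ)..L, u' t / asymNorm a b (u' t)
      = ∫ t in (0 : ℝ)..L, u' t / F (u t) := intervalIntegral.integral_congr fun t ht => by
        simp only [hFu (uIcc_of_le hL ▸ ht)]
    _ = 0 := h.adm.1.integral_deriv_div_comp_eq_zero hL (h.adm.2.1.trans h.adm.2.2.symm) hF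
        (lt_min ha hb) fun t ht => (min_mul_abs_le_asymNorm a b _).trans_eq (hFu ht).symm

end IsFucikSol

/-- The clock rate of the time change carrying the weights `(a, b)` to weights `(a', b')` with
`a + b = a' + b'`, as a function of the slope `y`: it is `a' / a` for `y > 0`, `b' / b` for
`y < 0`, and `1` at `y = 0`, where `0 / 0 = 0`. It is written as `1` plus a multiple of
`y / asymNorm a b y` because the latter integrates to `0` along solutions. -/
noncomputable def clockRate (a b a' y : ℝ) : ℝ :=
  1 + (a' - a) * (y / asymNorm a b y)

section clockRate

variable {a b a' b' y : ℝ}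

lemma clockRate_of_pos (ha : 0 < a) (b a' : ℝ) (hy : 0 < y) : clockRate a b a' y = a' / a := by
  rw [clockRate, asymNorm_of_nonneg a b hy.le]
  field_simp
  ring

lemma clockRate_of_neg (hb : 0 < b) (hab : a + b = a' + b') (hy : y < 0) :
    clockRate a b a' y = b' / b := by
  obtain rfl : b' = a + b - a' := eq_sub_of_add_eq' hab.symm
  have hy₀ : y ≠ 0 := hy.ne
  rw [clockRate, asymNorm_of_nonpos a b hy.le]
  field_simp
  ring

lemma clockRate_zero (a b a' : ℝ) : clockRate a b a' 0 = 1 := by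
  rw [clockRate, zero_div, mul_zero, add_zero]

lemma clockRate_mem_Icc (ha : 0 < a) (hb : 0 < b) (hab : a + b = a' + b') (y : ℝ) :
    clockRate a b a' y ∈
      Icc (min (a' / a) (min (b' / b) 1)) (max (a' / a) (max (b' / b) 1)) := by
  rcases lt_trichotomy y 0 with hneg | rfl | hpos
  · simp [clockRate_of_neg hb hab hneg]
  · simp [clockRate_zero]
  · simp [clockRate_of_pos ha b a' hpos]

lemma clockRate_pos (ha : 0 < a) (hb : 0 < b) (ha' : 0 < a') (hb' : 0 < b')
    (hab : a + b = a' + b') (y : ℝ) : 0 < clockRate a b a' y :=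
  lt_of_lt_of_le (by positivity) (clockRate_mem_Icc ha hb hab y).1

lemma measurable_clockRate (a b a' : ℝ) : Measurable (clockRate a b a') :=
  ((measurable_id.div (continuous_asymNorm a b).measurable).const_mul _).const_add _

lemma clockRate_eventuallyEq (ha : 0 < a) (hb : 0 < b) (hab : a + b = a' + b') (hy : y ≠ 0) :
    clockRate a b a' =ᶠ[𝓝 y] fun _ => clockRate a b a' y := by
  rcases hy.lt_or_gt with hneg | hpos
  · filter_upwards [eventually_lt_nhds hneg] with z hz
    rw [clockRate_of_neg hb hab hz, clockRate_of_neg hb hab hneg]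
  · filter_upwards [eventually_gt_nhds hpos] with z hz
    rw [clockRate_of_pos ha b a' hz, clockRate_of_pos ha b a' hpos]

lemma div_clockRate (ha : 0 < a) (hb : 0 < b) (hab : a + b = a' + b') (y : ℝ) :
    y / clockRate a b a' y = asymPow 1 (a / a') (b / b') y := by
  rcases lt_trichotomy y 0 with hneg | rfl | hpos
  · rw [clockRate_of_neg hb hab hneg, asymPow_of_neg one_ne_zero hneg, Real.rpow_one, mul_neg,
      neg_neg, div_div_eq_mul_div, mul_comm, mul_div_right_comm]
  · rw [zero_div, asymPow_zero one_ne_zero]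
  · rw [clockRate_of_pos ha b a' hpos, asymPow_of_pos one_ne_zero hpos, Real.rpow_one,
      div_div_eq_mul_div, mul_comm, mul_div_right_comm]

lemma asymFlux_div_clockRate {p : ℝ} (hp : 1 < p) (ha : 0 < a) (hb : 0 < b) (ha' : 0 < a')
    (hb' : 0 < b') (hab : a + b = a' + b') (y : ℝ) :
    asymFlux p a' b' (y / clockRate a b a' y) = clockRate a b a' y * asymFlux p a b y := by
  have hp₁ : p - 1 ≠ 0 := (sub_pos.2 hp).ne'
  have hcoeff {c c' : ℝ} (hc : 0 < c) (hc' : 0 < c') :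
      (c / c') ^ (p - 1) * c' ^ p = c' / c * c ^ p := by
    rw [Real.div_rpow hc.le hc'.le, Real.rpow_sub_one hc.ne', Real.rpow_sub_one hc'.ne']
    have : c' ^ p ≠ 0 := (Real.rpow_pos_of_pos hc' p).ne'
    field_simp
  have hflux : asymFlux p a' b' (y / clockRate a b a' y) =
      asymPow (p - 1) (a' / a * a ^ p) (b' / b * b ^ p) y := by
    rw [div_clockRate ha hb hab]
    refine (asymPow_asymPow hp₁ one_ne_zero (div_pos ha ha') (div_pos hb hb') _ _ y).trans ?_
    rw [one_mul, hcoeff ha ha', hcoeff hb hb']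
  rw [hflux, show asymFlux p a b y = asymPow (p - 1) (a ^ p) (b ^ p) y from rfl]
  rcases lt_trichotomy y 0 with hneg | rfl | hpos
  · rw [clockRate_of_neg hb hab hneg, asymPow_of_neg hp₁ hneg, asymPow_of_neg hp₁ hneg]
    ring
  · rw [asymPow_zero hp₁, asymPow_zero hp₁, mul_zero]
  · rw [clockRate_of_pos ha b a' hpos, asymPow_of_pos hp₁ hpos, asymPow_of_pos hp₁ hpos]
    ring

end clockRate

section TimeChange

variable {p a b a' b' L μ ν : ℝ} {u u' : ℝ → ℝ}

lemma intervalIntegrable_div_asymNorm (ha : 0 < a) (hb : 0 < b) (hu' : Measurable u') (x y : ℝ) :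
    IntervalIntegrable (fun t => u' t / asymNorm a b (u' t)) volume x y := by
  have hmeas : Measurable fun t => u' t / asymNorm a b (u' t) :=
    hu'.div ((continuous_asymNorm a b).measurable.comp hu')
  exact (intervalIntegrable_const (c := (min a b)⁻¹)).mono_fun' hmeas.aestronglyMeasurable
    (.of_forall fun t => abs_div_asymNorm_le ha hb (u' t))

namespace IsFucikSol

lemma integral_clockRate (h : IsFucikSol p a b L μ ν u u') (hp : 1 < p) (hL : 0 ≤ L) (ha : 0 < a)
    (hb : 0 < b) (a' : ℝ) : ∫ t in (0 : ℝ)..L, clockRate a b a' (u' t) = L := by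
  have hint := intervalIntegrable_div_asymNorm ha hb h.continuous_deriv.measurable 0 L
  simp only [clockRate]
  rw [intervalIntegral.integral_add intervalIntegrable_const (hint.const_mul _),
    intervalIntegral.integral_const_mul, h.integral_deriv_div_asymNorm hp ha hb hL, mul_zero,
    add_zero, integral_one, sub_zero]

lemma exists_clock (h : IsFucikSol p a b L μ ν u u') (hp : 1 < p) (hL : 0 ≤ L)
    (ha : 0 < a) (hb : 0 < b) (ha' : 0 < a') (hb' : 0 < b') (hab : a + b = a' + b') :
    ∃ s : ℝ ≃o ℝ, s 0 = 0 ∧ s L = L ∧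
      ∀ t, u' t ≠ 0 → HasDerivAt s (clockRate a b a' (u' t)) t := by
  have hbounds (t : ℝ) := clockRate_mem_Icc ha hb hab (u' t)
  obtain ⟨s, hs, hderiv⟩ := exists_orderIso_eq_integral
    ((measurable_clockRate a b a').comp h.continuous_deriv.measurable) (by positivity)
    (fun t => (hbounds t).1) fun t => (hbounds t).2
  refine ⟨s, by rw [hs, intervalIntegral.integral_same],
    (hs L).trans (h.integral_clockRate hp hL ha hb a'), fun t ht => hderiv t ?_⟩
  exact (continuousAt_const.congr (clockRate_eventuallyEq ha hb hab ht).symm).comp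
    h.continuous_deriv.continuousAt

lemma exists_of_add_eq (h : IsFucikSol p a b L μ ν u u') (hp : 1 < p) (hL : 0 ≤ L)
    (ha : 0 < a) (hb : 0 < b) (ha' : 0 < a') (hb' : 0 < b') (hab : a + b = a' + b') :
    ∃ v v' : ℝ → ℝ, IsFucikSol p a' b' L μ ν v v' := by
  obtain ⟨s, hs0, hsL, hs⟩ := h.exists_clock hp hL ha hb ha' hb' hab
  set ρ : ℝ → ℝ := fun t => clockRate a b a' (u' t)
  have hZ := h.countable_setOf_deriv_eq_zero hp ha hb
  have hne {t : ℝ} (ht : t ∈ Ioo 0 L \ {t ∈ Ioo 0 L | u' t = 0}) : u' t ≠ 0 :=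
    fun hzero => ht.2 ⟨ht.1, hzero⟩
  have hρ (t : ℝ) : ρ t ≠ 0 := (clockRate_pos ha hb ha' hb' hab (u' t)).ne'
  have hv' : Continuous fun t => u' t / ρ t := by
    simp only [ρ, div_clockRate ha hb hab]
    exact (continuous_asymPow one_pos _ _).comp h.continuous_deriv
  have hv : C1On (s 0) (s L) (fun x => u (s.symm x)) (fun x => u' (s.symm x) / ρ (s.symm x)) := by
    refine c1On_comp_orderIso_symm hZ (fun t ht => hs t (hne ht)) (fun t _ => hρ t)
      h.adm.1.continuousOn hv'.continuousOn fun t ht => ?_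
    exact (h.adm.1.hasDerivAt ht.1).congr_deriv (mul_div_cancel₀ _ (hρ t)).symm
  have hflux : C1On (s 0) (s L) (fun x => asymFlux p a' b' (u' (s.symm x) / ρ (s.symm x)))
      (fun x => -asymPow (p - 1) μ ν (u (s.symm x))) := by
    refine c1On_comp_orderIso_symm hZ (fun t ht => hs t (hne ht)) (fun t _ => hρ t)
      ((continuous_asymFlux hp a' b').comp hv').continuousOn h.flux.2 fun t ht => ?_
    refine ((h.flux.hasDerivAt ht.1).const_mul (ρ t)).congr_of_eventuallyEq ?_
    filter_upwards [h.continuous_deriv.continuousAt.eventually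
      (clockRate_eventuallyEq ha hb hab (hne ht))] with x hx
    exact (asymFlux_div_clockRate hp ha hb ha' hb' hab (u' x)).trans
      (congrArg (· * asymFlux p a b (u' x)) hx)
  rw [hs0, hsL] at hv hflux
  obtain ⟨t, ht, hut⟩ := h.nontrivial
  have hst : s t ∈ Icc 0 L := hs0 ▸ hsL ▸ ⟨s.monotone ht.1, s.monotone ht.2⟩
  refine ⟨_, _, ⟨hv, ?_, ?_⟩, hv'.comp s.symm.continuous, hflux, s t, hst, ?_⟩
  · rw [s.symm_apply_eq.2 hs0.symm, h.adm.2.1]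
  · rw [s.symm_apply_eq.2 hsL.symm, h.adm.2.2]
  · rwa [s.symm_apply_apply]

end IsFucikSol

end TimeChange

section Spectrum

variable {p a b a' b' c L μ ν : ℝ}

lemma fucikMem_iff_of_add_eq (hp : 1 < p) (hL : 0 < L) (ha : 0 < a) (hb : 0 < b) (ha' : 0 < a')
    (hb' : 0 < b') (hab : a + b = a' + b') : FucikMem p a b L μ ν ↔ FucikMem p a' b' L μ ν := by
  rw [fucikMem_iff_exists_isFucikSol hp hL, fucikMem_iff_exists_isFucikSol hp hL]
  exact ⟨fun ⟨_, _, h⟩ => h.exists_of_add_eq hp hL.le ha hb ha' hb' hab,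
    fun ⟨_, _, h⟩ => h.exists_of_add_eq hp hL.le ha' hb' ha hb hab.symm⟩

lemma isWeakSol_mul_iff (hc : 0 < c) (ha : 0 ≤ a) (hb : 0 ≤ b) {u u' g : ℝ → ℝ} :
    IsWeakSol p (c * a) (c * b) L u u' (fun t => c ^ p * g t) ↔ IsWeakSol p a b L u u' g := by
  have hflux (y : ℝ) : asymFlux p (c * a) (c * b) y = c ^ p * asymFlux p a b y := by
    rw [asymFlux, asymFlux, Real.mul_rpow hc.le ha, Real.mul_rpow hc.le hb]
    ring
  simp only [IsWeakSol, hflux, mul_assoc, intervalIntegral.integral_const_mul,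
    mul_right_inj' (Real.rpow_pos_of_pos hc p).ne']

lemma fucikMem_mul_iff (hc : 0 < c) (ha : 0 ≤ a) (hb : 0 ≤ b) :
    FucikMem p (c * a) (c * b) L (c ^ p * μ) (c ^ p * ν) ↔ FucikMem p a b L μ ν := by
  simp only [FucikMem, mul_assoc, ← mul_sub, isWeakSol_mul_iff hc ha hb]

end Spectrum

theorem stmt16 (p a b L : ℝ) (hp : 1 < p) (ha : 0 < a) (hb : 0 < b) (hL : 0 < L) :
    ∀ μ ν : ℝ, FucikMem p a b L μ ν ↔
      FucikMem p 1 1 L ((2 / (a + b)) ^ p * μ) ((2 / (a + b)) ^ p * ν) := by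
  intro μ ν
  have hm : 0 < (a + b) / 2 := by positivity
  have hc : 0 < 2 / (a + b) := by positivity
  have hcm : 2 / (a + b) * ((a + b) / 2) = 1 := by field_simp
  calc FucikMem p a b L μ ν
      ↔ FucikMem p ((a + b) / 2) ((a + b) / 2) L μ ν :=
        fucikMem_iff_of_add_eq hp hL ha hb hm hm (add_halves (a + b)).symm
    _ ↔ FucikMem p 1 1 L ((2 / (a + b)) ^ p * μ) ((2 / (a + b)) ^ p * ν) := by
        rw [← fucikMem_mul_iff hc hm.le hm.le, hcm]
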